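/- arXiv:0908.0577 — 3 statements merged into one kernel-verified Lean document; each statement's English description precedes it below -/
import Mathlib

section
/- Let n ≥ 1, let (Ω, μ) be a measure space with 0 < μ(Ω) < ∞, and let B : Ω → Matrix (Fin n) (Fin n) ℂ be a matrix-valued function whose entries are integrable, such that: (i) B(x) is Hermitian for μ-a.e. x; (ii) every entry has zero mean, ∫_Ω B(x)_{ij} dμ(x) = 0 for all i, j; (iii) I + B(x) is positive definite for μ-a.e. x; and (iv) there is a real constant c ≥ 1 with det(I + B(x)) = c for μ-a.e. x. Then c = 1 and B(x) = 0 for μ-a.e. x. -/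
open MeasureTheory
open scoped ComplexOrder

/-!
For a positive definite matrix `A` with eigenvalues `λᵢ`, summing `log λᵢ ≤ λᵢ - 1` gives
`log (det A) ≤ tr (A - 1)`, with equality only if every `λᵢ` is `1`, that is `A = 1`. Applied to
`A = 1 + B x`, this makes `tr (B x)` nonnegative as soon as `1 ≤ det (1 + B x)`. Having integral
zero, it vanishes almost everywhere, and then `0 ≤ log (det (1 + B x)) ≤ tr (B x) = 0` is the
equality case.
-/

section PosDef

variable {ι 𝕜 : Type*} [Fintype ι] [DecidableEq ι] [RCLike 𝕜] {A B : Matrix ι ι 𝕜}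

theorem eq_one_of_eigenvalues_eq_one (hA : A.IsHermitian) (h : ∀ i, hA.eigenvalues i = 1) :
    A = 1 := by
  have hdiag : RCLike.ofReal ∘ hA.eigenvalues = (1 : ι → 𝕜) := by
    ext i
    simp [h i]
  rw [hA.spectral_theorem, hdiag, Matrix.diagonal_one', map_one]

theorem log_re_det_eq_sum_log_eigenvalues (hA : A.PosDef) :
    Real.log (RCLike.re A.det) = ∑ i, Real.log (hA.1.eigenvalues i) := by
  rw [hA.1.det_eq_prod_eigenvalues, ← RCLike.ofReal_prod, RCLike.ofReal_re,
    Real.log_prod fun i _ => (hA.eigenvalues_pos i).ne']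

theorem re_trace_sub_card_eq_sum_eigenvalues_sub_one (hA : A.IsHermitian) :
    RCLike.re A.trace - Fintype.card ι = ∑ i, (hA.eigenvalues i - 1) := by
  simp [hA.trace_eq_sum_eigenvalues]

theorem log_re_det_le_re_trace_sub_card (hA : A.PosDef) :
    Real.log (RCLike.re A.det) ≤ RCLike.re A.trace - Fintype.card ι := by
  rw [log_re_det_eq_sum_log_eigenvalues hA, re_trace_sub_card_eq_sum_eigenvalues_sub_one hA.1]
  exact Finset.sum_le_sum fun i _ => Real.log_le_sub_one_of_pos (hA.eigenvalues_pos i)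

theorem log_re_det_eq_re_trace_sub_card_iff (hA : A.PosDef) :
    Real.log (RCLike.re A.det) = RCLike.re A.trace - Fintype.card ι ↔ A = 1 := by
  refine ⟨fun h => eq_one_of_eigenvalues_eq_one hA.1 fun i => ?_, fun h => by simp [h]⟩
  rw [log_re_det_eq_sum_log_eigenvalues hA, re_trace_sub_card_eq_sum_eigenvalues_sub_one hA.1,
    Finset.sum_eq_sum_iff_of_le
      fun i _ => Real.log_le_sub_one_of_pos (hA.eigenvalues_pos i)] at h
  by_contra hne
  exact (Real.log_lt_sub_one_of_pos (hA.eigenvalues_pos i) hne).ne (h i (Finset.mem_univ i))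

theorem log_re_det_one_add_le_re_trace (hB : (1 + B).PosDef) :
    Real.log (RCLike.re (1 + B).det) ≤ RCLike.re B.trace := by
  simpa using log_re_det_le_re_trace_sub_card hB

theorem log_re_det_one_add_eq_re_trace_iff (hB : (1 + B).PosDef) :
    Real.log (RCLike.re (1 + B).det) = RCLike.re B.trace ↔ B = 0 := by
  simpa using log_re_det_eq_re_trace_sub_card_iff hB

end PosDef

section Integral

variable {Ω ι E : Type*} [MeasurableSpace Ω] {μ : Measure Ω} [Fintype ι] [NormedAddCommGroup E]
  {B : Ω → Matrix ι ι E}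

theorem integrable_trace (hB : ∀ i, Integrable (fun x => B x i i) μ) :
    Integrable (fun x => (B x).trace) μ :=
  integrable_finsetSum _ fun i _ => hB i

theorem integral_trace [NormedSpace ℝ E] (hB : ∀ i, Integrable (fun x => B x i i) μ) :
    ∫ x, (B x).trace ∂μ = ∑ i, ∫ x, B x i i ∂μ :=
  integral_finsetSum _ fun i _ => hB i

end Integral

section General

variable {Ω ι 𝕜 : Type*} [MeasurableSpace Ω] {μ : Measure Ω} [Fintype ι] [DecidableEq ι] [RCLike 𝕜]
  {B : Ω → Matrix ι ι 𝕜}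

theorem ae_eq_zero_of_one_le_re_det_one_add
    (hint : Integrable (fun x => (B x).trace) μ) (hmean : ∫ x, (B x).trace ∂μ = 0)
    (hpos : ∀ᵐ x ∂μ, (1 + B x).PosDef) (hdet : ∀ᵐ x ∂μ, 1 ≤ RCLike.re (1 + B x).det) :
    ∀ᵐ x ∂μ, B x = 0 := by
  have htrace_nonneg : ∀ᵐ x ∂μ, 0 ≤ RCLike.re (B x).trace := by
    filter_upwards [hpos, hdet] with x hx hdetx
    exact (Real.log_nonneg hdetx).trans (log_re_det_one_add_le_re_trace hx)
  have hmean_re : ∫ x, RCLike.re (B x).trace ∂μ = 0 := by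
    rw [integral_re hint, hmean, map_zero]
  have htrace_zero : ∀ᵐ x ∂μ, RCLike.re (B x).trace = 0 :=
    (integral_eq_zero_iff_of_nonneg_ae htrace_nonneg hint.re).mp hmean_re
  filter_upwards [hpos, hdet, htrace_zero] with x hx hdetx htracex
  refine (log_re_det_one_add_eq_re_trace_iff hx).mp ?_
  refine (log_re_det_one_add_le_re_trace hx).antisymm ?_
  exact htracex.trans_le (Real.log_nonneg hdetx)

theorem ae_eq_zero_of_det_one_add_eq_const_general (hμ : μ ≠ 0)
    (hint : Integrable (fun x => (B x).trace) μ) (hmean : ∫ x, (B x).trace ∂μ = 0)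
    (hpos : ∀ᵐ x ∂μ, (1 + B x).PosDef) {c : ℝ} (hc : 1 ≤ c)
    (hdet : ∀ᵐ x ∂μ, (1 + B x).det = (c : 𝕜)) :
    c = 1 ∧ ∀ᵐ x ∂μ, B x = 0 := by
  have hB : ∀ᵐ x ∂μ, B x = 0 :=
    ae_eq_zero_of_one_le_re_det_one_add hint hmean hpos <| hdet.mono fun x hx => by simpa [hx]
  have : NeZero μ := ⟨hμ⟩
  obtain ⟨x, hBx, hdetx⟩ := (hB.and hdet).exists
  have hone : (1 : 𝕜) = c := by simpa [hBx] using hdetx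
  exact ⟨by exact_mod_cast hone.symm, hB⟩

end General

/-- If `B` is an a.e.-Hermitian integrable matrix-valued function on a finite measure
space with zero-mean entries, `I + B` a.e. positive definite, and `det (I + B) = c`
a.e. for a constant `c ≥ 1`, then `c = 1` and `B = 0` a.e. -/
theorem ae_eq_zero_of_det_one_add_eq_const
    {Ω : Type*} [MeasurableSpace Ω] (μ : Measure Ω)
    (hμ0 : 0 < μ Set.univ) (hμfin : μ Set.univ < ⊤)
    (n : ℕ) (hn : 1 ≤ n)
    (B : Ω → Matrix (Fin n) (Fin n) ℂ)
    (hint : ∀ i j : Fin n, Integrable (fun x => B x i j) μ)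
    (hherm : ∀ᵐ x ∂μ, (B x).IsHermitian)
    (hmean : ∀ i j : Fin n, ∫ x, B x i j ∂μ = 0)
    (hpos : ∀ᵐ x ∂μ, (1 + B x).PosDef)
    (c : ℝ) (hc : 1 ≤ c)
    (hdet : ∀ᵐ x ∂μ, (1 + B x).det = (c : ℂ)) :
    c = 1 ∧ ∀ᵐ x ∂μ, B x = 0 := by
  exact ae_eq_zero_of_det_one_add_eq_const_general (Measure.measure_univ_pos.mp hμ0)
    (integrable_trace fun i => hint i i) (by simp [integral_trace, hint, hmean]) hpos hc hdet
end

section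
/- Z(k) tends to +∞ as k tends to 1 from below; that is, the function Z diverges to +∞ along the filter of left-neighborhoods of 1 within [0,1). -/
open MeasureTheory Real Filter

/-- `Z k = (1/(2π)) ∫₀^{2π} 1/(1 + k sin x) dx`. -/
noncomputable def Z (k : ℝ) : ℝ :=
  (1 / (2 * π)) * ∫ x in (0 : ℝ)..(2 * π), 1 / (1 + k * Real.sin x)

/-!
For `0 < k < 1` the integrand peaks at `x = 3π/2`, where its denominator equals `1 - k` and grows at
most like `(x - 3π/2)² / 2`. On the window `|x - 3π/2| ≤ √(1 - k)` the integrand is therefore at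
least a constant times `1 / (1 - k)`, so the window alone contributes at least a constant times
`1 / √(1 - k)`.
-/

open scoped Topology

theorem one_add_mul_sin_pos {k : ℝ} (hk : |k| < 1) (x : ℝ) : 0 < 1 + k * sin x := by
  have h : |k * sin x| < 1 := by
    rw [abs_mul]
    exact mul_lt_one_of_nonneg_of_lt_one_left (abs_nonneg k) hk (abs_sin_le_one x)
  linarith [neg_lt_of_abs_lt h]

theorem continuous_one_div_one_add_mul_sin {k : ℝ} (hk : |k| < 1) :
    Continuous fun x ↦ 1 / (1 + k * sin x) :=
  continuous_const.div (by fun_prop) fun x ↦ (one_add_mul_sin_pos hk x).ne'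

theorem one_add_mul_sin_le {k : ℝ} (hk : k ≤ 1) (x : ℝ) :
    1 + k * sin x ≤ 1 - k + (x - 3 * π / 2) ^ 2 / 2 := by
  set t := x - 3 * π / 2 with ht
  have hsin : sin x = -cos t := by
    rw [show x = t + π + π / 2 by rw [ht]; ring, sin_add_pi_div_two, cos_add_pi]
  calc
    1 + k * sin x = 1 - k + k * (1 - cos t) := by rw [hsin]; ring
    _ ≤ 1 - k + 1 * (1 - cos t) := by gcongr; linarith [cos_le_one t]
    _ ≤ 1 - k + t ^ 2 / 2 := by linarith [one_sub_sq_div_two_le_cos (x := t)]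

theorem div_sqrt_one_sub_le_integral_one_div {k : ℝ} (hk : |k| < 1) :
    4 / (3 * √(1 - k)) ≤ ∫ x in (0 : ℝ)..(2 * π), 1 / (1 + k * sin x) := by
  obtain ⟨hk_gt, hk_lt⟩ := abs_lt.mp hk
  set s := √(1 - k)
  set c := 3 * π / 2 with hc
  have hs_pos : 0 < s := sqrt_pos.mpr (by linarith)
  have hs_sq : s ^ 2 = 1 - k := sq_sqrt (by linarith)
  have hs_le : s ≤ π / 2 := by nlinarith [pi_gt_three]
  have hintegrable (a b : ℝ) : IntervalIntegrable (fun x ↦ 1 / (1 + k * sin x)) volume a b :=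
    (continuous_one_div_one_add_mul_sin hk).intervalIntegrable a b
  have hwindow : ∀ x ∈ Set.Icc (c - s) (c + s), 1 / (3 / 2 * s ^ 2) ≤ 1 / (1 + k * sin x) := by
    intro x hx
    have hx_sq : (x - c) ^ 2 ≤ s ^ 2 := sq_le_sq' (by linarith [hx.1]) (by linarith [hx.2])
    have hquad : 1 + k * sin x ≤ 1 - k + (x - c) ^ 2 / 2 := one_add_mul_sin_le hk_lt.le x
    exact one_div_le_one_div_of_le (one_add_mul_sin_pos hk x) (by linarith)
  calc
    4 / (3 * s) = ∫ _ in (c - s)..(c + s), 1 / (3 / 2 * s ^ 2) := by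
      rw [intervalIntegral.integral_const, smul_eq_mul]
      field_simp
      ring
    _ ≤ ∫ x in (c - s)..(c + s), 1 / (1 + k * sin x) :=
      intervalIntegral.integral_mono_on (by linarith) intervalIntegrable_const
        (hintegrable _ _) hwindow
    _ ≤ ∫ x in (0 : ℝ)..(2 * π), 1 / (1 + k * sin x) :=
      intervalIntegral.integral_mono_interval (by linarith [pi_pos]) (by linarith) (by linarith)
        (Eventually.of_forall fun x ↦ (one_div_pos.mpr (one_add_mul_sin_pos hk x)).le)
        (hintegrable _ _)

theorem mul_inv_sqrt_one_sub_le_Z {k : ℝ} (hk : |k| < 1) :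
    2 / (3 * π) * (√(1 - k))⁻¹ ≤ Z k :=
  calc
    2 / (3 * π) * (√(1 - k))⁻¹ = 1 / (2 * π) * (4 / (3 * √(1 - k))) := by field_simp; norm_num
    _ ≤ Z k := mul_le_mul_of_nonneg_left (div_sqrt_one_sub_le_integral_one_div hk) (by positivity)

theorem tendsto_sqrt_sub_nhdsLT (a : ℝ) : Tendsto (fun x ↦ √(a - x)) (𝓝[<] a) (𝓝[>] 0) := by
  refine tendsto_nhdsWithin_iff.mpr ⟨?_, ?_⟩
  · have hcont : Continuous fun x ↦ √(a - x) := by fun_prop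
    simpa using (hcont.tendsto a).mono_left nhdsWithin_le_nhds
  · filter_upwards [self_mem_nhdsWithin] with x hx
    exact sqrt_pos.mpr (sub_pos.mpr hx)

/-- `Z k → +∞` as `k → 1⁻` within `[0,1)`. -/
theorem Z_tendsto_atTop :
    Tendsto Z (nhdsWithin 1 (Set.Ico (0 : ℝ) 1)) atTop := by
  have hinv : Tendsto (fun k : ℝ ↦ (√(1 - k))⁻¹) (𝓝[Set.Ico 0 1] 1) atTop :=
    tendsto_inv_nhdsGT_zero.comp <|
      (tendsto_sqrt_sub_nhdsLT 1).mono_left (nhdsWithin_mono 1 fun _ hk ↦ hk.2)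
  refine tendsto_atTop_mono' _ ?_ (hinv.const_mul_atTop (r := 2 / (3 * π)) (by positivity))
  filter_upwards [self_mem_nhdsWithin] with k hk
  exact mul_inv_sqrt_one_sub_le_Z (abs_lt.mpr ⟨by linarith [hk.1], hk.2⟩)
end

section
/- For every δ with 0 < δ < 1 there exist a real number k with 0 < k < 1 and a smooth (C^∞) 2π-periodic function u : ℝ → ℝ such that 1 + u″(x)/4 > 0 and (1 + u″(x)/4)·(1 + k sin x) = δ for every x ∈ ℝ. -/
open Real

/-!
A `2π`-periodic smooth function is the second derivative of a smooth `2π`-periodic function as soon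
as its mean vanishes. With `k = √(1 - δ ^ 2)` the prescribed second derivative
`4 * (δ / (1 + k * sin x) - 1)` has mean zero, because
`∫ x in 0..2 * π, (1 + k * sin x)⁻¹ = 2 * π / √(1 - k ^ 2) = 2 * π / δ`.
-/

section PeriodicAntiderivative

variable {E : Type*} [NormedAddCommGroup E] [NormedSpace ℝ E] {f : ℝ → E} {T : ℝ} {n : ℕ∞}

theorem periodic_primitive (hf : ∀ a b, IntervalIntegrable f MeasureTheory.volume a b)
    (hfT : Function.Periodic f T) (hf0 : ∫ x in 0..T, f x = 0) :
    Function.Periodic (fun x ↦ ∫ t in 0..x, f t) T := fun x ↦ by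
  simpa [hf0] using hfT.intervalIntegral_add_eq_add 0 x hf

variable [CompleteSpace E]

theorem contDiff_add_one_primitive (hf : ContDiff ℝ n f) (a : ℝ) :
    ContDiff ℝ (n + 1) (fun x ↦ ∫ t in a..x, f t) := by
  have hderiv : deriv (fun x ↦ ∫ t in a..x, f t) = f :=
    funext (hf.continuous.deriv_integral f a)
  refine contDiff_succ_iff_deriv.2 ⟨fun x ↦ ?_, by simp, by rwa [hderiv]⟩
  exact (hf.continuous.integral_hasStrictDerivAt a x).hasDerivAt.differentiableAt

theorem exists_periodic_deriv_eq_of_integral_eq_zero (hf : ContDiff ℝ n f)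
    (hfT : Function.Periodic f T) (hf0 : ∫ x in 0..T, f x = 0) :
    ∃ F : ℝ → E, Function.Periodic F T ∧ ContDiff ℝ (n + 1) F ∧ deriv F = f ∧
      ∫ x in 0..T, F x = 0 := by
  set P : ℝ → E := fun x ↦ ∫ t in 0..x, f t
  have hP : ContDiff ℝ (n + 1) P := contDiff_add_one_primitive hf 0
  have hPT : Function.Periodic P T := periodic_primitive hf.continuous.intervalIntegrable hfT hf0
  set mean : E := T⁻¹ • ∫ x in 0..T, P x with hmean
  refine ⟨fun x ↦ P x - mean, hPT.sub (fun _ ↦ rfl), hP.sub contDiff_const, ?_, ?_⟩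
  · ext x
    rw [deriv_sub_const, hf.continuous.deriv_integral]
  · rw [intervalIntegral.integral_sub (hP.continuous.intervalIntegrable 0 T)
      intervalIntegrable_const, intervalIntegral.integral_const, sub_zero, hmean]
    rcases eq_or_ne T 0 with rfl | hT
    · simp
    · rw [smul_inv_smul₀ hT, sub_self]

theorem exists_periodic_deriv_deriv_eq_of_integral_eq_zero (hf : ContDiff ℝ n f)
    (hfT : Function.Periodic f T) (hf0 : ∫ x in 0..T, f x = 0) :
    ∃ u : ℝ → E, Function.Periodic u T ∧ ContDiff ℝ (n + 2) u ∧ deriv (deriv u) = f := by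
  obtain ⟨v, hvT, hv, rfl, hv0⟩ := exists_periodic_deriv_eq_of_integral_eq_zero hf hfT hf0
  obtain ⟨u, huT, hu, rfl, -⟩ :=
    exists_periodic_deriv_eq_of_integral_eq_zero (n := n + 1) (mod_cast hv) hvT hv0
  refine ⟨u, huT, ?_, rfl⟩
  simpa [add_assoc, one_add_one_eq_two] using hu

end PeriodicAntiderivative

section IntegralInvAddMulSin

variable {a b : ℝ}

theorem add_mul_sin_pos (h : |b| < a) (x : ℝ) : 0 < a + b * sin x := by
  have hbound : |b * sin x| ≤ |b| := by
    rw [abs_mul]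
    exact mul_le_of_le_one_right (abs_nonneg b) (abs_sin_le_one x)
  linarith [neg_abs_le (b * sin x)]

theorem sq_sub_sq_pos_of_abs_lt (h : |b| < a) : 0 < a ^ 2 - b ^ 2 :=
  sub_pos.2 (sq_lt_sq.2 (h.trans_le (le_abs_self a)))

theorem contDiff_inv_add_mul_sin {n : WithTop ℕ∞} (h : |b| < a) :
    ContDiff ℝ n fun x ↦ (a + b * sin x)⁻¹ :=
  (contDiff_const.add (contDiff_const.mul contDiff_sin)).inv fun x ↦ (add_mul_sin_pos h x).ne'

/- For `a = 1 + r ^ 2` and `b = 2 * r` with `|r| < 1`, the square root is `1 - r ^ 2`, the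
arctangent is `-arg (1 - I * r * exp (I * x))`, and the derivative is the Poisson kernel of the
unit disc. -/
theorem hasDerivAt_add_two_mul_arctan (h : |b| < a) (x : ℝ) :
    HasDerivAt (fun x ↦ x + 2 * arctan (b * cos x / (a + √(a ^ 2 - b ^ 2) + b * sin x)))
      (√(a ^ 2 - b ^ 2) * (a + b * sin x)⁻¹) x := by
  set s : ℝ := √(a ^ 2 - b ^ 2)
  have hs : 0 ≤ s := sqrt_nonneg _
  have hsq : s ^ 2 = a ^ 2 - b ^ 2 := sq_sqrt (sq_sub_sq_pos_of_abs_lt h).le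
  have has : a + s ≠ 0 := by linarith [abs_nonneg b]
  have hden : a + b * sin x ≠ 0 := (add_mul_sin_pos h x).ne'
  have hden' : a + s + b * sin x ≠ 0 := by linarith [add_mul_sin_pos h x]
  have hcos : cos x ^ 2 = 1 - sin x ^ 2 := cos_sq' x
  have hsumsq : 1 + (b * cos x / (a + s + b * sin x)) ^ 2 =
      2 * (a + s) * (a + b * sin x) / (a + s + b * sin x) ^ 2 := by
    field_simp
    linear_combination b ^ 2 * hcos + hsq
  have hquot := ((hasDerivAt_cos x).const_mul b).fun_div
    (((hasDerivAt_sin x).const_mul b).const_add (a + s)) hden'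
  have hnum : b * -sin x * (a + s + b * sin x) - b * cos x * (b * cos x) =
      -((a + s) * (a - s + b * sin x)) := by
    linear_combination (-b ^ 2) * hcos - hsq
  refine ((hasDerivAt_id' x).add (hquot.arctan.const_mul 2)).congr_deriv ?_
  rw [hsumsq, hnum]
  field_simp
  ring

theorem integral_inv_add_mul_sin (h : |b| < a) :
    ∫ x in 0..2 * π, (a + b * sin x)⁻¹ = 2 * π / √(a ^ 2 - b ^ 2) := by
  have hs : √(a ^ 2 - b ^ 2) ≠ 0 := (sqrt_pos.2 (sq_sub_sq_pos_of_abs_lt h)).ne'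
  have hcont : Continuous fun x ↦ √(a ^ 2 - b ^ 2) * (a + b * sin x)⁻¹ :=
    continuous_const.mul (contDiff_inv_add_mul_sin (n := 0) h).continuous
  rw [eq_div_iff hs, mul_comm, ← intervalIntegral.integral_const_mul,
    intervalIntegral.integral_eq_sub_of_hasDerivAt
      (fun x _ ↦ hasDerivAt_add_two_mul_arctan h x) (hcont.intervalIntegrable _ _)]
  simp

theorem integral_sqrt_mul_inv_add_mul_sin_sub_one (h : |b| < a) :
    ∫ x in 0..2 * π, (√(a ^ 2 - b ^ 2) * (a + b * sin x)⁻¹ - 1) = 0 := by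
  have hs : √(a ^ 2 - b ^ 2) ≠ 0 := (sqrt_pos.2 (sq_sub_sq_pos_of_abs_lt h)).ne'
  have hcont : Continuous fun x ↦ √(a ^ 2 - b ^ 2) * (a + b * sin x)⁻¹ :=
    continuous_const.mul (contDiff_inv_add_mul_sin (n := 0) h).continuous
  rw [intervalIntegral.integral_sub (hcont.intervalIntegrable _ _) intervalIntegrable_const,
    intervalIntegral.integral_const_mul, integral_inv_add_mul_sin h, mul_div_cancel₀ _ hs]
  simp

theorem exists_periodic_deriv_deriv_eq_sqrt_mul_inv_add_mul_sin_sub_one (h : |b| < a) (c : ℝ) :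
    ∃ u : ℝ → ℝ, Function.Periodic u (2 * π) ∧ ContDiff ℝ (⊤ : ℕ∞) u ∧
      deriv (deriv u) = fun x ↦ c * (√(a ^ 2 - b ^ 2) * (a + b * sin x)⁻¹ - 1) := by
  refine exists_periodic_deriv_deriv_eq_of_integral_eq_zero (n := ⊤) ?_ (fun x ↦ by simp) ?_
  · exact contDiff_const.mul
      ((contDiff_const.mul (contDiff_inv_add_mul_sin h)).sub contDiff_const)
  · rw [intervalIntegral.integral_const_mul, integral_sqrt_mul_inv_add_mul_sin_sub_one h, mul_zero]

end IntegralInvAddMulSin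

theorem exists_sqrt_one_sub_sq_eq {t : ℝ} (ht0 : 0 < t) (ht1 : t < 1) :
    ∃ k : ℝ, 0 < k ∧ k < 1 ∧ √(1 - k ^ 2) = t := by
  have htsq : 0 < 1 - t ^ 2 := by nlinarith
  refine ⟨√(1 - t ^ 2), sqrt_pos.2 htsq, ?_, ?_⟩
  · rw [sqrt_lt' one_pos]
    nlinarith
  · rw [sq_sqrt htsq.le, sub_sub_cancel, sqrt_sq ht0.le]

/-- For every `0 < δ < 1` there exist `0 < k < 1` and a smooth `2π`-periodic
function `u : ℝ → ℝ` with `1 + u″/4 > 0` and `(1 + u″/4)(1 + k sin x) = δ`. -/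
theorem exists_smooth_periodic_solution
    (δ : ℝ) (hδ0 : 0 < δ) (hδ1 : δ < 1) :
    ∃ (k : ℝ) (u : ℝ → ℝ), 0 < k ∧ k < 1 ∧
      Function.Periodic u (2 * π) ∧ ContDiff ℝ (⊤ : ℕ∞) u ∧
      ∀ x : ℝ, 0 < 1 + deriv (deriv u) x / 4 ∧
        (1 + deriv (deriv u) x / 4) * (1 + k * Real.sin x) = δ := by
  obtain ⟨k, hk0, hk1, hkδ⟩ := exists_sqrt_one_sub_sq_eq hδ0 hδ1
  have hk : |k| < 1 := by rwa [abs_of_pos hk0]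
  obtain ⟨u, hu_per, hu_smooth, hu_deriv⟩ :=
    exists_periodic_deriv_deriv_eq_sqrt_mul_inv_add_mul_sin_sub_one hk 4
  refine ⟨k, u, hk0, hk1, hu_per, hu_smooth, fun x ↦ ?_⟩
  have hpos : 0 < 1 + k * sin x := add_mul_sin_pos hk x
  have hsol : 1 + deriv (deriv u) x / 4 = δ * (1 + k * sin x)⁻¹ := by
    rw [hu_deriv, one_pow, hkδ]
    ring
  rw [hsol]
  exact ⟨mul_pos hδ0 (inv_pos.2 hpos), inv_mul_cancel_right₀ hpos.ne' δ⟩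
end
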